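/- arXiv:2302.08879 — 5 statements merged into one kernel-verified Lean document; each statement's English description precedes it below -/
import Mathlib

section
/- Let (𝒱,(K_b)_{b∈B}) be a BIBD with V vertices, block size K (2 ≤ K ≤ V), and pair-count Λ ≥ 1. If L ⊆ 𝒱 is an arc, i.e., #(K_b ∩ L) ≤ 2 for every b ∈ B, then (#L − 1)·(K − 1) ≤ V − 1. Moreover, for a nonempty arc L, equality (#L − 1)·(K − 1) = V − 1 holds if and only if #(K_b ∩ L) ∈ {0, 2} for every b ∈ B. -/
/-!
Fix a point `v` of `L`, let `r` be the number of blocks through `v`, and suppose that every block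
meets `L` in at most `n + 1` points. Counting pairs (block through `v`, further point of that block)
gives `r (K - 1) = (V - 1) Λ` over all points, and `(#L - 1) Λ ≤ n r` over the points of `L`.
Eliminating `r` yields `(#L - 1) (K - 1) ≤ n (V - 1)`, with equality iff every block through `v`
meets `L` in exactly `n + 1` points. As the bound does not mention `v`, equality at one point of `L`
forces it at all of them. Arcs are the case `n = 1`.
-/

/-- Pair balance, the second axiom of a balanced incomplete block design: any two distinct points
lie together in exactly `Λ` blocks. The blocks form an indexed family, so they may repeat. -/
def IsPairBalanced {𝒱 β : Type*} [DecidableEq 𝒱] [Fintype β] (Kb : β → Finset 𝒱) (Λ : ℕ) : Prop :=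
  ∀ v₁ v₂ : 𝒱, v₁ ≠ v₂ → (Finset.univ.filter (fun b => v₁ ∈ Kb b ∧ v₂ ∈ Kb b)).card = Λ

/-- The (indices of) blocks incident with the point `v`; their number is the replication number
`r` of `v`. -/
abbrev blocksThrough {𝒱 β : Type*} [DecidableEq 𝒱] [Fintype β] (Kb : β → Finset 𝒱) (v : 𝒱) :
    Finset β :=
  {b | v ∈ Kb b}

namespace IsPairBalanced

open Finset

variable {𝒱 β : Type*} [DecidableEq 𝒱] [Fintype β] {Kb : β → Finset 𝒱} {K Λ n : ℕ}
  {L : Finset 𝒱} {v : 𝒱}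

theorem sum_card_inter_erase (h : IsPairBalanced Kb Λ) (S : Finset 𝒱) (v : 𝒱) :
    ∑ b ∈ blocksThrough Kb v, #(Kb b ∩ S.erase v) = #(S.erase v) * Λ := by
  calc ∑ b ∈ blocksThrough Kb v, #(Kb b ∩ S.erase v)
      = ∑ b ∈ blocksThrough Kb v, #{u ∈ S.erase v | u ∈ Kb b} := by
        simp only [inter_comm (Kb _), filter_mem_eq_inter]
    _ = ∑ u ∈ S.erase v, #{b ∈ blocksThrough Kb v | u ∈ Kb b} :=
        sum_card_bipartiteAbove_eq_sum_card_bipartiteBelow fun b u => u ∈ Kb b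
    _ = #(S.erase v) * Λ := by
        refine sum_const_nat fun u hu => ?_
        rw [filter_filter, h v u (ne_of_mem_erase hu).symm]

theorem sum_card_inter_sub_one (h : IsPairBalanced Kb Λ) (hv : v ∈ L) :
    ∑ b ∈ blocksThrough Kb v, (#(Kb b ∩ L) - 1) = (#L - 1) * Λ := by
  rw [← card_erase_of_mem hv, ← h.sum_card_inter_erase]
  refine sum_congr rfl fun b hb => ?_
  rw [inter_erase, card_erase_of_mem (mem_inter_of_mem (mem_filter.mp hb).2 hv)]

theorem card_blocksThrough_mul [Fintype 𝒱] (h : IsPairBalanced Kb Λ) (hcard : ∀ b, #(Kb b) = K)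
    (v : 𝒱) : #(blocksThrough Kb v) * (K - 1) = (Fintype.card 𝒱 - 1) * Λ := by
  simpa only [inter_univ, hcard, sum_const, smul_eq_mul, card_univ]
    using h.sum_card_inter_sub_one (mem_univ v)

theorem card_sub_one_mul_le_mul_card_blocksThrough (h : IsPairBalanced Kb Λ) (hv : v ∈ L)
    (harc : ∀ b, #(Kb b ∩ L) ≤ n + 1) : (#L - 1) * Λ ≤ n * #(blocksThrough Kb v) := by
  rw [← h.sum_card_inter_sub_one hv, mul_comm, ← smul_eq_mul]
  exact sum_le_card_nsmul _ _ _ fun b _ => Nat.sub_le_of_le_add (harc b)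

theorem card_sub_one_mul_eq_mul_card_blocksThrough_iff (h : IsPairBalanced Kb Λ) (hv : v ∈ L)
    (harc : ∀ b, #(Kb b ∩ L) ≤ n + 1) :
    (#L - 1) * Λ = n * #(blocksThrough Kb v) ↔ ∀ b, v ∈ Kb b → #(Kb b ∩ L) = n + 1 := by
  rw [← h.sum_card_inter_sub_one hv, mul_comm, ← smul_eq_mul, ← sum_const,
    sum_eq_sum_iff_of_le fun b _ => Nat.sub_le_of_le_add (harc b)]
  simp only [mem_filter_univ]
  refine forall₂_congr fun b hb => ?_
  have hpos : 0 < #(Kb b ∩ L) := card_pos.mpr ⟨v, mem_inter_of_mem hb hv⟩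
  omega

variable [Fintype 𝒱]

theorem card_sub_one_mul_le (h : IsPairBalanced Kb Λ) (hΛ : 1 ≤ Λ) (hcard : ∀ b, #(Kb b) = K)
    (harc : ∀ b, #(Kb b ∩ L) ≤ n + 1) :
    (#L - 1) * (K - 1) ≤ n * (Fintype.card 𝒱 - 1) := by
  obtain rfl | ⟨v, hv⟩ := L.eq_empty_or_nonempty
  · simp
  refine Nat.le_of_mul_le_mul_right ?_ hΛ
  calc (#L - 1) * (K - 1) * Λ
      = (#L - 1) * Λ * (K - 1) := mul_right_comm ..
    _ ≤ n * #(blocksThrough Kb v) * (K - 1) :=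
        Nat.mul_le_mul_right _ (h.card_sub_one_mul_le_mul_card_blocksThrough hv harc)
    _ = n * ((Fintype.card 𝒱 - 1) * Λ) := by rw [mul_assoc, h.card_blocksThrough_mul hcard]
    _ = n * (Fintype.card 𝒱 - 1) * Λ := (mul_assoc ..).symm

theorem card_sub_one_mul_eq_iff_of_mem (h : IsPairBalanced Kb Λ) (hK : 2 ≤ K) (hΛ : 1 ≤ Λ)
    (hcard : ∀ b, #(Kb b) = K) (hv : v ∈ L) (harc : ∀ b, #(Kb b ∩ L) ≤ n + 1) :
    (#L - 1) * (K - 1) = n * (Fintype.card 𝒱 - 1) ↔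
      ∀ b, v ∈ Kb b → #(Kb b ∩ L) = n + 1 := by
  calc (#L - 1) * (K - 1) = n * (Fintype.card 𝒱 - 1)
      ↔ (#L - 1) * (K - 1) * Λ = n * (Fintype.card 𝒱 - 1) * Λ :=
        (Nat.mul_left_inj (Nat.pos_iff_ne_zero.mp hΛ)).symm
    _ ↔ (#L - 1) * Λ * (K - 1) = n * #(blocksThrough Kb v) * (K - 1) := by
        rw [mul_right_comm, mul_assoc n, ← h.card_blocksThrough_mul hcard v, ← mul_assoc]
    _ ↔ (#L - 1) * Λ = n * #(blocksThrough Kb v) := Nat.mul_left_inj (Nat.sub_ne_zero_of_lt hK)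
    _ ↔ ∀ b, v ∈ Kb b → #(Kb b ∩ L) = n + 1 :=
        h.card_sub_one_mul_eq_mul_card_blocksThrough_iff hv harc

theorem card_sub_one_mul_eq_iff (h : IsPairBalanced Kb Λ) (hK : 2 ≤ K) (hΛ : 1 ≤ Λ)
    (hcard : ∀ b, #(Kb b) = K) (hL : L.Nonempty) (harc : ∀ b, #(Kb b ∩ L) ≤ n + 1) :
    (#L - 1) * (K - 1) = n * (Fintype.card 𝒱 - 1) ↔
      ∀ b, #(Kb b ∩ L) = 0 ∨ #(Kb b ∩ L) = n + 1 := by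
  constructor
  · intro heq b
    obtain hdisj | ⟨u, hu⟩ := (Kb b ∩ L).eq_empty_or_nonempty
    · exact .inl (card_eq_zero.mpr hdisj)
    · obtain ⟨hub, huL⟩ := mem_inter.mp hu
      exact .inr ((h.card_sub_one_mul_eq_iff_of_mem hK hΛ hcard huL harc).mp heq b hub)
  · intro hoval
    obtain ⟨v, hv⟩ := hL
    exact (h.card_sub_one_mul_eq_iff_of_mem hK hΛ hcard hv harc).mpr fun b hb =>
      (hoval b).resolve_left (card_ne_zero_of_mem (mem_inter_of_mem hb hv))

end IsPairBalanced

-- Writing the intersection bound as `n + 1` keeps the truncated `n - 1` out of the inequality.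
theorem arc_bound_in_BIBD_general
    {𝒱 β : Type*} [Fintype 𝒱] [DecidableEq 𝒱] [Fintype β]
    {K Λ n : ℕ} (hK2 : 2 ≤ K) (hΛ : 1 ≤ Λ)
    {Kb : β → Finset 𝒱} (hcard : ∀ b, (Kb b).card = K) (hBIBD : IsPairBalanced Kb Λ)
    {L : Finset 𝒱} (harc : ∀ b, (Kb b ∩ L).card ≤ n + 1) :
    (L.card - 1) * (K - 1) ≤ n * (Fintype.card 𝒱 - 1) ∧
    (L.Nonempty →
      ((L.card - 1) * (K - 1) = n * (Fintype.card 𝒱 - 1) ↔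
        ∀ b, (Kb b ∩ L).card = 0 ∨ (Kb b ∩ L).card = n + 1)) :=
  ⟨hBIBD.card_sub_one_mul_le hΛ hcard harc,
    fun hL => hBIBD.card_sub_one_mul_eq_iff hK2 hΛ hcard hL harc⟩

/-- In a BIBD with `V` vertices, block size `K` (`2 ≤ K ≤ V`) and
pair-count `Λ ≥ 1`, any arc `L` (a set meeting every block in at most 2 points)
satisfies `(#L − 1)(K − 1) ≤ V − 1`; moreover, for a nonempty arc, equality holds
iff `L` meets every block in either 0 or 2 points (i.e. `L` is an oval). -/
theorem arc_bound_in_BIBD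
    {𝒱 β : Type*} [Fintype 𝒱] [DecidableEq 𝒱] [Fintype β] [Nonempty β]
    (K Λ : ℕ) (hK2 : 2 ≤ K) (hKV : K ≤ Fintype.card 𝒱) (hΛ : 1 ≤ Λ)
    (Kb : β → Finset 𝒱) (hcard : ∀ b, (Kb b).card = K)
    (hBIBD : ∀ v₁ v₂ : 𝒱, v₁ ≠ v₂ →
      (Finset.univ.filter (fun b => v₁ ∈ Kb b ∧ v₂ ∈ Kb b)).card = Λ)
    (L : Finset 𝒱) (harc : ∀ b, (Kb b ∩ L).card ≤ 2) :
    (L.card - 1) * (K - 1) ≤ Fintype.card 𝒱 - 1 ∧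
    (L.Nonempty →
      ((L.card - 1) * (K - 1) = Fintype.card 𝒱 - 1 ↔
        ∀ b, (Kb b ∩ L).card = 0 ∨ (Kb b ∩ L).card = 2)) := by
  simpa only [one_mul] using arc_bound_in_BIBD_general (n := 1) hK2 hΛ hcard hBIBD harc
end

section
/- Let (φ_n)_{n∈N} be a finite family of N vectors of equal norm in a complex inner product space whose span has dimension strictly less than N. If the natural action of its symmetry group on N is doubly transitive, then (φ_n)_{n∈N} is an ETF: there exists C > 0 with |⟨φ_{n₁}, φ_{n₂}⟩| = C for all n₁ ≠ n₂, and there exists A > 0 with ∑_{n₂∈N} ⟨φ_{n₁}, φ_{n₂}⟩·⟨φ_{n₂}, φ_{n₃}⟩ = A·⟨φ_{n₁}, φ_{n₃}⟩ for all n₁, n₃. -/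
open scoped BigOperators

noncomputable section

/-!
The symmetries of the family are the permutations under which its Gram matrix `G` is multiplied
entrywise by `conj (z i) * z j`. Since these phases cancel in matrix products, `G²` has the same
symmetries with the same phases. By double transitivity a matrix with these symmetries is determined
by one diagonal and one off-diagonal entry. Some off-diagonal entry of `G` is nonzero, as otherwise
`G` would be an invertible diagonal matrix, so the off-diagonal entries have a common positive
modulus and `G² = r G + d I`. As `G` is singular, `d I = (G - r I) G` has determinant zero, whence
`d = 0` and `G² = r G`; comparing diagonal entries shows `r > 0`.
-/

section PhaseSymmetry

variable {ι R : Type*} [CommRing R] [StarRing R]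

/-- `σ` is a symmetry of `M` with phases `z`: permuting the indices by `σ` amounts to conjugating
`M` by the diagonal unitary matrix of the `z i`. The phases are kept explicit so that several
matrices can be compared under the same symmetry. For the Gram matrix of a family of vectors of
equal norm this is a symmetry of the family, the diagonal entries being preserved anyway. -/
structure IsPhaseSymmetry (M : Matrix ι ι R) (σ : Equiv.Perm ι) (z : ι → R) : Prop where
  phase_mem_unitary : ∀ i, z i ∈ unitary R
  apply_apply : ∀ i j, M (σ i) (σ j) = star (z i) * z j * M i j

/-- Double transitivity on the index set of the phase symmetries of `M`. -/
def HasDoublyTransitiveSymmetry (M : Matrix ι ι R) : Prop :=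
  ∀ ⦃i j k l : ι⦄, i ≠ j → k ≠ l → ∃ σ z, IsPhaseSymmetry M σ z ∧ σ i = k ∧ σ j = l

namespace IsPhaseSymmetry

variable {M N : Matrix ι ι R} {σ : Equiv.Perm ι} {z : ι → R}

lemma of_offDiag (hz : ∀ i, z i ∈ unitary R) (hdiag : ∀ i, M (σ i) (σ i) = M i i)
    (hoff : ∀ i j, i ≠ j → M (σ i) (σ j) = star (z i) * z j * M i j) :
    IsPhaseSymmetry M σ z where
  phase_mem_unitary := hz
  apply_apply i j := by
    obtain rfl | hij := eq_or_ne i j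
    · rw [hdiag, Unitary.star_mul_self_of_mem (hz i), one_mul]
    · exact hoff i j hij

lemma apply_self (hM : IsPhaseSymmetry M σ z) (i : ι) : M (σ i) (σ i) = M i i := by
  rw [hM.apply_apply, Unitary.star_mul_self_of_mem (hM.phase_mem_unitary i), one_mul]

lemma sub (hM : IsPhaseSymmetry M σ z) (hN : IsPhaseSymmetry N σ z) :
    IsPhaseSymmetry (M - N) σ z where
  phase_mem_unitary := hM.phase_mem_unitary
  apply_apply i j := by
    rw [Matrix.sub_apply, Matrix.sub_apply, hM.apply_apply, hN.apply_apply, mul_sub]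

lemma smul (r : R) (hM : IsPhaseSymmetry M σ z) : IsPhaseSymmetry (r • M) σ z where
  phase_mem_unitary := hM.phase_mem_unitary
  apply_apply i j := by
    rw [Matrix.smul_apply, Matrix.smul_apply, hM.apply_apply, mul_smul_comm]

lemma mul [Fintype ι] (hM : IsPhaseSymmetry M σ z) (hN : IsPhaseSymmetry N σ z) :
    IsPhaseSymmetry (M * N) σ z where
  phase_mem_unitary := hM.phase_mem_unitary
  apply_apply i j := by
    have phases_cancel (k : ι) : z k * star (z k) = 1 :=
      Unitary.mul_star_self_of_mem (hM.phase_mem_unitary k)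
    calc (M * N) (σ i) (σ j)
        = ∑ k, M (σ i) (σ k) * N (σ k) (σ j) :=
          (Equiv.sum_comp σ fun k => M (σ i) k * N k (σ j)).symm
      _ = ∑ k, star (z i) * z j * (M i k * N k j) :=
          Finset.sum_congr rfl fun k _ => by
            rw [hM.apply_apply, hN.apply_apply]
            linear_combination star (z i) * z j * (M i k * N k j) * phases_cancel k
      _ = star (z i) * z j * (M * N) i j := by rw [Matrix.mul_apply, Finset.mul_sum]

lemma norm_apply {R : Type*} [NormedCommRing R] [StarRing R] [CStarRing R] {M : Matrix ι ι R}
    {z : ι → R} (hM : IsPhaseSymmetry M σ z) (i j : ι) : ‖M (σ i) (σ j)‖ = ‖M i j‖ := by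
  have phase_mem : star (z i) * z j ∈ unitary R :=
    mul_mem (Unitary.star_mem (hM.phase_mem_unitary i)) (hM.phase_mem_unitary j)
  rw [hM.apply_apply, CStarRing.norm_mem_unitary_mul _ phase_mem]

end IsPhaseSymmetry

namespace HasDoublyTransitiveSymmetry

variable {M N : Matrix ι ι R}

lemma mono (hM : HasDoublyTransitiveSymmetry M)
    (hMN : ∀ σ z, IsPhaseSymmetry M σ z → IsPhaseSymmetry N σ z) :
    HasDoublyTransitiveSymmetry N := fun _ _ _ _ hij hkl =>
  let ⟨σ, z, hσ, hik, hjl⟩ := hM hij hkl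
  ⟨σ, z, hMN σ z hσ, hik, hjl⟩

lemma apply_self_eq_apply_self (hM : HasDoublyTransitiveSymmetry M) (i j : ι) :
    M i i = M j j := by
  obtain rfl | hij := eq_or_ne i j
  · rfl
  · obtain ⟨σ, z, hσ, rfl, -⟩ := hM hij.symm hij
    exact hσ.apply_self j

lemma isDiag (hM : HasDoublyTransitiveSymmetry M) {i j : ι} (hij : i ≠ j) (h : M i j = 0) :
    M.IsDiag := fun k l hkl => by
  obtain ⟨σ, z, hσ, rfl, rfl⟩ := hM hij hkl
  rw [hσ.apply_apply, h, mul_zero]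

lemma eq_smul_one [DecidableEq ι] (hM : HasDoublyTransitiveSymmetry M) {i j : ι} (hij : i ≠ j)
    (h : M i j = 0) : M = M i i • (1 : Matrix ι ι R) := by
  rw [Matrix.smul_one_eq_diagonal, ← (hM.isDiag hij h).diagonal_diag]
  congr 1
  funext k
  simpa using hM.apply_self_eq_apply_self k i

lemma norm_apply_eq {R : Type*} [NormedCommRing R] [StarRing R] [CStarRing R]
    {M : Matrix ι ι R} (hM : HasDoublyTransitiveSymmetry M) {i j k l : ι} (hij : i ≠ j)
    (hkl : k ≠ l) : ‖M k l‖ = ‖M i j‖ := by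
  obtain ⟨σ, z, hσ, rfl, rfl⟩ := hM hij hkl
  exact hσ.norm_apply i j

end HasDoublyTransitiveSymmetry

end PhaseSymmetry

section Singular

variable {ι R : Type*} [Fintype ι] [DecidableEq ι] [CommRing R] {M : Matrix ι ι R}

lemma exists_offDiag_ne_zero_of_det_eq_zero [IsDomain R] (hdet : M.det = 0)
    (hdiag : ∀ i, M i i ≠ 0) : ∃ i j, i ≠ j ∧ M i j ≠ 0 := by
  by_contra! hoff
  have hM : M.IsDiag := fun i j hij => hoff i j hij
  rw [← hM.diagonal_diag, Matrix.det_diagonal] at hdet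
  exact Finset.prod_ne_zero_iff.2 (fun i _ => hdiag i) hdet

lemma eq_zero_of_mul_self_eq_smul_add_smul_one [IsReduced R] (hdet : M.det = 0) {r d : R}
    (h : M * M = r • M + d • (1 : Matrix ι ι R)) : d = 0 := by
  have factor : d • (1 : Matrix ι ι R) = (M - r • (1 : Matrix ι ι R)) * M := by
    rw [sub_mul, h, smul_mul_assoc, one_mul, add_sub_cancel_left]
  have det_scalar : d ^ Fintype.card ι = 0 := by
    simpa only [Matrix.det_smul, Matrix.det_one, mul_one, Matrix.det_mul, hdet, mul_zero] using
      congrArg Matrix.det factor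
  exact eq_zero_of_pow_eq_zero det_scalar

end Singular

namespace HasDoublyTransitiveSymmetry

variable {ι K : Type*} [Field K] [StarRing K] {M N : Matrix ι ι K}

lemma exists_eq_smul_add_smul_one [DecidableEq ι] (hM : HasDoublyTransitiveSymmetry M)
    (hMN : ∀ σ z, IsPhaseSymmetry M σ z → IsPhaseSymmetry N σ z) {i j : ι} (hij : i ≠ j)
    (hMij : M i j ≠ 0) : ∃ r d : K, N = r • M + d • (1 : Matrix ι ι K) := by
  set r := N i j / M i j with hr
  have symmetry_sub : HasDoublyTransitiveSymmetry (N - r • M) :=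
    hM.mono fun σ z hσ => (hMN σ z hσ).sub (hσ.smul r)
  have entry_sub : (N - r • M) i j = 0 := by
    rw [Matrix.sub_apply, Matrix.smul_apply, smul_eq_mul, hr, div_mul_cancel₀ _ hMij, sub_self]
  exact ⟨r, _, sub_eq_iff_eq_add'.1 (symmetry_sub.eq_smul_one hij entry_sub)⟩

lemma exists_mul_self_eq_smul [Fintype ι] [DecidableEq ι] (hM : HasDoublyTransitiveSymmetry M)
    (hdet : M.det = 0) {i j : ι} (hij : i ≠ j) (hMij : M i j ≠ 0) : ∃ r : K, M * M = r • M := by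
  obtain ⟨r, d, hrd⟩ := hM.exists_eq_smul_add_smul_one (fun σ z hσ => hσ.mul hσ) hij hMij
  refine ⟨r, ?_⟩
  rw [hrd, eq_zero_of_mul_self_eq_smul_add_smul_one hdet hrd, zero_smul, add_zero]

end HasDoublyTransitiveSymmetry

section RCLike

variable {𝕜 ι : Type*} [RCLike 𝕜] [Fintype ι]

lemma mem_unitary_of_norm_eq_one {w : 𝕜} (hw : ‖w‖ = 1) : w ∈ unitary 𝕜 := by
  rw [Unitary.mem_iff_self_mul_star, RCLike.star_def, RCLike.mul_conj, hw, RCLike.ofReal_one,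
    one_pow]

lemma mul_self_apply_self_of_isHermitian {M : Matrix ι ι 𝕜} (hM : M.IsHermitian) (i : ι) :
    (M * M) i i = ((∑ k, ‖M i k‖ ^ 2 : ℝ) : 𝕜) := by
  rw [Matrix.mul_apply, RCLike.ofReal_sum]
  refine Finset.sum_congr rfl fun k _ => ?_
  rw [← hM.apply k i, RCLike.star_def, RCLike.mul_conj, RCLike.ofReal_pow]

lemma exists_pos_eq_of_mul_self_eq_smul {M : Matrix ι ι 𝕜} (hM : M.IsHermitian) {r : 𝕜}
    (hr : M * M = r • M) {i : ι} (hi : 0 < RCLike.re (M i i)) :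
    ∃ A : ℝ, 0 < A ∧ r = A := by
  have hMi : M i i ≠ 0 := fun h => by simp [h] at hi
  have row_norm_pos : 0 < ∑ k, ‖M i k‖ ^ 2 :=
    Finset.sum_pos' (fun k _ => sq_nonneg _)
      ⟨i, Finset.mem_univ i, pow_pos (norm_pos_iff.2 hMi) 2⟩
  have diag_eq : r * M i i = ((∑ k, ‖M i k‖ ^ 2 : ℝ) : 𝕜) := by
    rw [← mul_self_apply_self_of_isHermitian hM, hr, Matrix.smul_apply, smul_eq_mul]
  refine ⟨_, div_pos row_norm_pos hi, ?_⟩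
  rw [RCLike.ofReal_div, hM.coe_re_apply_self, ← diag_eq, mul_div_cancel_right₀ _ hMi]

variable {E : Type*} [SeminormedAddCommGroup E] [InnerProductSpace 𝕜 E] {φ : ι → E}

lemma det_gram_eq_zero_of_finrank_span_lt [DecidableEq ι]
    (h : Module.finrank 𝕜 (Submodule.span 𝕜 (Set.range φ)) < Fintype.card ι) :
    (Matrix.gram 𝕜 φ).det = 0 := by
  by_contra hdet
  exact h.ne (finrank_span_eq_card (Matrix.linearIndependent_of_det_gram_ne_zero hdet))

end RCLike

theorem doubly_transitive_implies_ETF_general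
    {𝕜 E ι : Type*} [RCLike 𝕜] [SeminormedAddCommGroup E] [InnerProductSpace 𝕜 E]
    [Fintype ι]
    (φ : ι → E) (S : ℝ) (hS : 0 < S)
    (hnorm : ∀ n, (inner 𝕜 (φ n) (φ n) : 𝕜) = (S : 𝕜))
    (hdim : Module.finrank 𝕜 (Submodule.span 𝕜 (Set.range φ)) < Fintype.card ι)
    (hDT : ∀ n₁ n₂ n₃ n₄ : ι, n₁ ≠ n₂ → n₃ ≠ n₄ →
      ∃ σ : Equiv.Perm ι,
        (∃ z : ι → 𝕜, (∀ n, ‖z n‖ = 1) ∧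
          ∀ m₁ m₂ : ι, m₁ ≠ m₂ →
            (inner 𝕜 (φ (σ m₁)) (φ (σ m₂)) : 𝕜) =
              (starRingEnd 𝕜) (z m₁) * z m₂ * (inner 𝕜 (φ m₁) (φ m₂) : 𝕜)) ∧
        σ n₁ = n₃ ∧ σ n₂ = n₄) :
    (∃ C : ℝ, 0 < C ∧ ∀ n₁ n₂ : ι, n₁ ≠ n₂ → ‖(inner 𝕜 (φ n₁) (φ n₂) : 𝕜)‖ = C) ∧
    (∃ A : ℝ, 0 < A ∧ ∀ n₁ n₃ : ι,
      (∑ n₂, (inner 𝕜 (φ n₁) (φ n₂) : 𝕜) * (inner 𝕜 (φ n₂) (φ n₃) : 𝕜)) =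
        (A : 𝕜) * (inner 𝕜 (φ n₁) (φ n₃) : 𝕜)) := by
  classical
  have hdiag (i : ι) : Matrix.gram 𝕜 φ i i = S := hnorm i
  have hdet : (Matrix.gram 𝕜 φ).det = 0 := det_gram_eq_zero_of_finrank_span_lt hdim
  have hsymm : HasDoublyTransitiveSymmetry (Matrix.gram 𝕜 φ) := fun i j k l hij hkl =>
    let ⟨σ, ⟨z, hz, hσ⟩, hik, hjl⟩ := hDT i j k l hij hkl
    ⟨σ, z, .of_offDiag (fun n => mem_unitary_of_norm_eq_one (hz n))
      (fun n => by rw [hdiag, hdiag]) hσ, hik, hjl⟩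
  obtain ⟨i, j, hij, hG⟩ := exists_offDiag_ne_zero_of_det_eq_zero hdet fun n => by
    rw [hdiag]
    exact RCLike.ofReal_ne_zero.2 hS.ne'
  obtain ⟨r, hr⟩ := hsymm.exists_mul_self_eq_smul hdet hij hG
  obtain ⟨A, hA, rfl⟩ :=
    exists_pos_eq_of_mul_self_eq_smul (Matrix.isHermitian_gram 𝕜 φ) hr (i := i) <| by
      rwa [hdiag, RCLike.ofReal_re]
  exact ⟨⟨‖Matrix.gram 𝕜 φ i j‖, norm_pos_iff.2 hG, fun _ _ hkl => hsymm.norm_apply_eq hij hkl⟩,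
    A, hA, fun k l => congrFun₂ hr k l⟩

/-- If an equal-norm family of `N` vectors in a complex inner
product space spans a subspace of dimension `< N` and its symmetry group acts
doubly transitively on the index set, then the family is an ETF: its cross inner
products have a common positive modulus `C` and the tightness identity
`∑ ⟨φ n₁, φ n₂⟩⟨φ n₂, φ n₃⟩ = A⟨φ n₁, φ n₃⟩` holds for some `A > 0`. -/
theorem doubly_transitive_implies_ETF
    {E ι : Type*} [NormedAddCommGroup E] [InnerProductSpace ℂ E] [Fintype ι]
    (φ : ι → E) (S : ℝ) (hS : 0 < S)
    (hnorm : ∀ n, (inner ℂ (φ n) (φ n) : ℂ) = (S : ℂ))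
    (hdim : Module.finrank ℂ (Submodule.span ℂ (Set.range φ)) < Fintype.card ι)
    (hDT : ∀ n₁ n₂ n₃ n₄ : ι, n₁ ≠ n₂ → n₃ ≠ n₄ →
      ∃ σ : Equiv.Perm ι,
        (∃ z : ι → ℂ, (∀ n, ‖z n‖ = 1) ∧
          ∀ m₁ m₂ : ι, m₁ ≠ m₂ →
            (inner ℂ (φ (σ m₁)) (φ (σ m₂)) : ℂ) =
              (starRingEnd ℂ) (z m₁) * z m₂ * (inner ℂ (φ m₁) (φ m₂) : ℂ)) ∧
        σ n₁ = n₃ ∧ σ n₂ = n₄) :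
    (∃ C : ℝ, 0 < C ∧ ∀ n₁ n₂ : ι, n₁ ≠ n₂ → ‖(inner ℂ (φ n₁) (φ n₂) : ℂ)‖ = C) ∧
    (∃ A : ℝ, 0 < A ∧ ∀ n₁ n₃ : ι,
      (∑ n₂, (inner ℂ (φ n₁) (φ n₂) : ℂ) * (inner ℂ (φ n₂) (φ n₃) : ℂ)) =
        (A : ℂ) * (inner ℂ (φ n₁) (φ n₃) : ℂ)) :=
  doubly_transitive_implies_ETF_general φ S hS hnorm hdim hDT
end
end

section
/- Let Q be a prime power, J a positive integer, and B a symplectic form on a 2J-dimensional vector space V over the finite field F_Q. Then the number of Lagrangian subspaces of V (subspaces L with L = L^⊥) equals ∏_{j=1}^{J}(Q^j + 1). -/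
open scoped BigOperators

noncomputable section

/-- A bilinear form is symplectic: alternating and nondegenerate. -/
def IsSymplectic {F V : Type*} [CommRing F] [AddCommGroup V] [Module F V]
    (B : V →ₗ[F] V →ₗ[F] F) : Prop :=
  (∀ v, B v v = 0) ∧ ∀ v : V, v ≠ 0 → ∃ w, B v w ≠ 0

/-- The orthogonal complement of a subset with respect to a bilinear form. -/
def sympPerp {F V : Type*} [CommRing F] [AddCommGroup V] [Module F V]
    (B : V →ₗ[F] V →ₗ[F] F) (S : Set V) : Set V :=
  {w | ∀ v ∈ S, B v w = 0}

/-- A subspace is Lagrangian if it equals its own orthogonal complement. -/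
def IsLagrangian {F V : Type*} [CommRing F] [AddCommGroup V] [Module F V]
    (B : V →ₗ[F] V →ₗ[F] F) (L : Submodule F V) : Prop :=
  (L : Set V) = sympPerp B (L : Set V)

/-!
Count the pairs `(v, L)` with `L` Lagrangian and `0 ≠ v ∈ L`. The Lagrangians containing an
isotropic subspace `I` correspond to the Lagrangians of the symplectic reduction `I^⊥ / I`, which
for the line `I = ⟨v⟩` has dimension `2(J - 1)`. Hence the number `c_J` of Lagrangians satisfies
`(Q^(2J) - 1) c_(J-1) = c_J (Q^J - 1)`, that is, `c_J = (Q^J + 1) c_(J-1)`.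
-/

section Incidence

variable {R V : Type*} [Semiring R] [AddCommMonoid V] [Module R V] [Finite V]

lemma card_sub_one_mul_eq_ncard_mul_card_sub_one {S : Set (Submodule R V)} {c n : ℕ}
    (hcard : ∀ L ∈ S, Nat.card L = c) (hmem : ∀ v : V, v ≠ 0 → {L ∈ S | v ∈ L}.ncard = n) :
    (Nat.card V - 1) * n = S.ncard * (c - 1) := by
  classical
  have := Fintype.ofFinite V
  have := Fintype.ofFinite (Submodule R V)
  have hvectors : (Finset.univ.erase (0 : V)).card = Nat.card V - 1 := by
    rw [Finset.card_erase_of_mem (Finset.mem_univ _), Finset.card_univ, Nat.card_eq_fintype_card]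
  rw [← hvectors, Set.ncard_eq_toFinset_card']
  refine Finset.card_mul_eq_card_mul (fun v L ↦ v ∈ L) (fun v hv ↦ ?_) (fun L hL ↦ ?_)
  · rw [← hmem v (Finset.ne_of_mem_erase hv), ← Set.ncard_coe_finset]
    simp only [Finset.bipartiteAbove, Finset.coe_filter, Set.mem_toFinset]
  · have hnonzero : (Finset.univ.erase (0 : V)).bipartiteBelow (fun v L ↦ v ∈ L) L =
        (L : Set V).toFinset.erase 0 := by
      ext v
      simp [Finset.bipartiteBelow]
    rw [hnonzero, Finset.card_erase_of_mem (by simp), ← Set.ncard_eq_toFinset_card',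
      ← hcard L (Set.mem_toFinset.1 hL), ← Nat.card_coe_set_eq]
    rfl

end Incidence

section Form

variable {R V : Type*} [CommRing R] [AddCommGroup V] [Module R V]
  {B : LinearMap.BilinForm R V} {L : Submodule R V}

lemma IsSymplectic.isAlt (hB : IsSymplectic B) : B.IsAlt := hB.1

lemma IsSymplectic.nondegenerate (hB : IsSymplectic B) : B.Nondegenerate :=
  hB.isAlt.isRefl.nondegenerate_iff_separatingLeft.2 fun v hv ↦
    by_contra fun hv₀ ↦ (hB.2 v hv₀).elim fun w hw ↦ hw (hv w)

lemma isLagrangian_iff_orthogonal_eq : IsLagrangian B L ↔ B.orthogonal L = L :=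
  eq_comm.trans (SetLike.coe_set_eq (p := B.orthogonal L))

lemma isLagrangian_bot [Subsingleton V] : IsLagrangian B ⊥ :=
  isLagrangian_iff_orthogonal_eq.2 (Subsingleton.elim _ _)

lemma span_singleton_le_orthogonal (hB : B.IsAlt) (v : V) :
    Submodule.span R {v} ≤ B.orthogonal (Submodule.span R {v}) := by
  rw [Submodule.span_singleton_le_iff_mem]
  intro x hx
  obtain ⟨a, rfl⟩ := Submodule.mem_span_singleton.1 hx
  rw [map_smul, LinearMap.smul_apply, hB v, smul_zero]

end Form

section Reduction

variable {R V : Type*} [CommRing R] [AddCommGroup V] [Module R V]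

/-- The underlying module `I^⊥ / (I ∩ I^⊥)` of the reduction of a bilinear form along `I`; for
isotropic `I` this is the symplectic reduction `I^⊥ / I`. -/
abbrev Reduction (B : LinearMap.BilinForm R V) (I : Submodule R V) : Type _ :=
  B.orthogonal I ⧸ I.submoduleOf (B.orthogonal I)

variable {B : LinearMap.BilinForm R V} {I : Submodule R V}

/-- The form induced on the reduction `I^⊥ / (I ∩ I^⊥)` by a reflexive form. -/
def reducedForm (hB : B.IsRefl) (I : Submodule R V) : LinearMap.BilinForm R (Reduction B I) :=
  LinearMap.IsRefl.liftQ₂ (B.restrict (B.orthogonal I)) (I.submoduleOf (B.orthogonal I))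
    (fun x y ↦ hB x y) fun x hx ↦ LinearMap.ext fun y ↦ y.2 x hx

@[simp]
lemma reducedForm_mk (hB : B.IsRefl) (x y : B.orthogonal I) :
    reducedForm hB I (Submodule.Quotient.mk x) (Submodule.Quotient.mk y) = B x y :=
  rfl

/-- The preimage in `V` of a submodule of the reduction along `I`. -/
def reductionLift (M : Submodule R (Reduction B I)) : Submodule R V :=
  (M.comap (I.submoduleOf (B.orthogonal I)).mkQ).map (B.orthogonal I).subtype

lemma mem_reductionLift {M : Submodule R (Reduction B I)} {x : V} :
    x ∈ reductionLift M ↔ ∃ hx : x ∈ B.orthogonal I,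
      (Submodule.Quotient.mk ⟨x, hx⟩ : Reduction B I) ∈ M := by
  simp [reductionLift]

lemma reductionLift_injective :
    Function.Injective (reductionLift : Submodule R (Reduction B I) → Submodule R V) :=
  (Submodule.map_injective_of_injective (B.orthogonal I).injective_subtype).comp
    (Submodule.comap_injective_of_surjective (Submodule.mkQ_surjective _))

lemma le_reductionLift (hI : I ≤ B.orthogonal I) (M : Submodule R (Reduction B I)) :
    I ≤ reductionLift M := by
  intro x hx
  refine mem_reductionLift.2 ⟨hI hx, ?_⟩
  rw [(Submodule.Quotient.mk_eq_zero _).2 (show _ ∈ I.submoduleOf _ from hx)]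
  exact M.zero_mem

lemma exists_reductionLift_eq {L : Submodule R V} (hIL : I ≤ L) (hL : L ≤ B.orthogonal I) :
    ∃ M : Submodule R (Reduction B I), reductionLift M = L := by
  refine ⟨(L.submoduleOf (B.orthogonal I)).map (Submodule.mkQ _), ?_⟩
  rw [reductionLift, Submodule.comap_map_mkQ, ← Submodule.submoduleOf_sup_of_le (hIL.trans hL) hL,
    sup_eq_right.2 hIL, Submodule.submoduleOf, Submodule.map_comap_subtype, inf_eq_right.2 hL]

lemma orthogonal_reductionLift (hB : B.IsRefl) (hI : I ≤ B.orthogonal I)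
    (M : Submodule R (Reduction B I)) :
    B.orthogonal (reductionLift M) = reductionLift ((reducedForm hB I).orthogonal M) := by
  ext x
  rw [mem_reductionLift]
  constructor
  · intro hx
    refine ⟨LinearMap.BilinForm.orthogonal_le (le_reductionLift hI M) hx, fun m hm ↦ ?_⟩
    obtain ⟨y, rfl⟩ := Submodule.Quotient.mk_surjective _ m
    exact hx y (mem_reductionLift.2 ⟨y.2, hm⟩)
  · rintro ⟨_, hx⟩ y hy
    obtain ⟨_, hy⟩ := mem_reductionLift.1 hy
    exact hx _ hy

lemma isLagrangian_reductionLift_iff (hB : B.IsRefl) (hI : I ≤ B.orthogonal I)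
    {M : Submodule R (Reduction B I)} :
    IsLagrangian B (reductionLift M) ↔ IsLagrangian (reducedForm hB I) M := by
  rw [isLagrangian_iff_orthogonal_eq, isLagrangian_iff_orthogonal_eq,
    orthogonal_reductionLift hB hI, reductionLift_injective.eq_iff]

lemma reductionLift_image_isLagrangian (hB : B.IsRefl) (hI : I ≤ B.orthogonal I) :
    reductionLift '' {M | IsLagrangian (reducedForm hB I) M} =
      {L | IsLagrangian B L ∧ I ≤ L} := by
  ext L
  constructor
  · rintro ⟨M, hM, rfl⟩
    exact ⟨(isLagrangian_reductionLift_iff hB hI).2 hM, le_reductionLift hI M⟩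
  · rintro ⟨hL, hIL⟩
    have hLI : L ≤ B.orthogonal I :=
      (isLagrangian_iff_orthogonal_eq.1 hL).ge.trans (LinearMap.BilinForm.orthogonal_le hIL)
    obtain ⟨M, rfl⟩ := exists_reductionLift_eq hIL hLI
    exact ⟨M, (isLagrangian_reductionLift_iff hB hI).1 hL, rfl⟩

lemma ncard_isLagrangian_and_le (hB : B.IsRefl) (hI : I ≤ B.orthogonal I) :
    {L | IsLagrangian B L ∧ I ≤ L}.ncard = {M | IsLagrangian (reducedForm hB I) M}.ncard := by
  rw [← reductionLift_image_isLagrangian hB hI,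
    Set.ncard_image_of_injective _ reductionLift_injective]

end Reduction

section FiniteDimensional

variable {F V : Type*} [Field F] [AddCommGroup V] [Module F V] [FiniteDimensional F V]
  {B : LinearMap.BilinForm F V} {I L : Submodule F V}

lemma IsLagrangian.two_mul_finrank (hL : IsLagrangian B L) (hB : B.Nondegenerate) :
    2 * Module.finrank F L = Module.finrank F V := by
  have horth := LinearMap.BilinForm.finrank_orthogonal hB L
  rw [isLagrangian_iff_orthogonal_eq.1 hL] at horth
  have := L.finrank_le
  lia

lemma finrank_reduction_add_two_mul_finrank (hB : B.Nondegenerate) (hI : I ≤ B.orthogonal I) :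
    Module.finrank F (Reduction B I) + 2 * Module.finrank F I = Module.finrank F V := by
  have hquot := Submodule.finrank_quotient_add_finrank (I.submoduleOf (B.orthogonal I))
  rw [(Submodule.submoduleOfEquivOfLe hI).finrank_eq,
    LinearMap.BilinForm.finrank_orthogonal hB] at hquot
  have := I.finrank_le
  lia

lemma IsSymplectic.reducedForm (hB : IsSymplectic B) (I : Submodule F V) :
    IsSymplectic (reducedForm hB.isAlt.isRefl I) := by
  constructor
  · intro v
    obtain ⟨x, rfl⟩ := Submodule.Quotient.mk_surjective _ v
    exact hB.isAlt x
  · intro v hv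
    obtain ⟨x, rfl⟩ := Submodule.Quotient.mk_surjective _ v
    contrapose! hv
    have hx : (x : V) ∈ B.orthogonal (B.orthogonal I) := fun y hy ↦
      hB.isAlt.isRefl _ _ (hv (Submodule.Quotient.mk ⟨y, hy⟩))
    rw [LinearMap.BilinForm.orthogonal_orthogonal hB.nondegenerate hB.isAlt.isRefl] at hx
    exact (Submodule.Quotient.mk_eq_zero _).2 hx

end FiniteDimensional

section FiniteField

variable {F V : Type*} [Field F] [Finite F] [AddCommGroup V] [Module F V] [Finite V]
  {B : LinearMap.BilinForm F V} {d n : ℕ}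

lemma ncard_isLagrangian_eq_pow_add_one_mul (hB : IsSymplectic B) (hd : 0 < d)
    (hdim : Module.finrank F V = 2 * d)
    (hn : ∀ v : V, v ≠ 0 →
      {M | IsLagrangian (reducedForm hB.isAlt.isRefl (Submodule.span F {v})) M}.ncard = n) :
    {L : Submodule F V | IsLagrangian B L}.ncard = (Nat.card F ^ d + 1) * n := by
  have hcard (L : Submodule F V) (hL : IsLagrangian B L) : Nat.card L = Nat.card F ^ d := by
    have := hL.two_mul_finrank hB.nondegenerate
    rw [Module.natCard_eq_pow_finrank (K := F), show Module.finrank F L = d by lia]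
  have hmem (v : V) (hv : v ≠ 0) :
      {L ∈ {L : Submodule F V | IsLagrangian B L} | v ∈ L}.ncard = n := by
    rw [← hn v hv, ← ncard_isLagrangian_and_le hB.isAlt.isRefl
      (span_singleton_le_orthogonal hB.isAlt v)]
    simp only [Set.mem_ofPred_eq, Submodule.span_singleton_le_iff_mem]
  have hpos : 0 < Nat.card F ^ d - 1 :=
    Nat.sub_pos_of_lt (Nat.one_lt_pow hd.ne' Finite.one_lt_card)
  refine Nat.eq_of_mul_eq_mul_right hpos ?_
  calc {L : Submodule F V | IsLagrangian B L}.ncard * (Nat.card F ^ d - 1)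
      = (Nat.card V - 1) * n := (card_sub_one_mul_eq_ncard_mul_card_sub_one hcard hmem).symm
    _ = ((Nat.card F ^ d) ^ 2 - 1 ^ 2) * n := by
      rw [Module.natCard_eq_pow_finrank (K := F), hdim, mul_comm 2, pow_mul, one_pow]
    _ = (Nat.card F ^ d + 1) * n * (Nat.card F ^ d - 1) := by
      rw [Nat.sq_sub_sq, mul_right_comm]

end FiniteField

/-- Over a finite field of prime-power order `Q`, a symplectic
`2J`-dimensional space has exactly `∏_{j=1}^{J}(Q^j + 1)` Lagrangian
subspaces. -/
theorem card_lagrangian_subspaces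
    {Q J : ℕ} (hQ : ∃ p n : ℕ, p.Prime ∧ 0 < n ∧ Q = p ^ n) (hJ : 0 < J)
    {F : Type*} [Field F] [Fintype F] (hF : Fintype.card F = Q)
    {V : Type*} [AddCommGroup V] [Module F V] [Fintype V]
    (hdim : Module.finrank F V = 2 * J)
    (B : V →ₗ[F] V →ₗ[F] F) (hB : IsSymplectic B) :
    {L : Submodule F V | IsLagrangian B L}.ncard =
      ∏ j ∈ Finset.Icc 1 J, (Q ^ j + 1) := by
  subst hF
  clear hQ hJ
  induction J generalizing V with
  | zero =>
    have : Subsingleton V := Module.finrank_zero_iff.1 hdim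
    have hLagrangian : {L : Submodule F V | IsLagrangian B L} = {⊥} :=
      Set.Subsingleton.eq_singleton_of_mem Set.subsingleton_of_subsingleton isLagrangian_bot
    rw [hLagrangian, Set.ncard_singleton, Finset.Icc_eq_empty (by lia), Finset.prod_empty]
  | succ J ih =>
    rw [Finset.prod_Icc_succ_top (by lia), mul_comm, ← Nat.card_eq_fintype_card]
    refine ncard_isLagrangian_eq_pow_add_one_mul hB J.succ_pos hdim fun v hv ↦ ?_
    have : Finite (Reduction B (Submodule.span F {v})) := Module.finite_of_finite F
    have := Fintype.ofFinite (Reduction B (Submodule.span F {v}))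
    have hreduction := finrank_reduction_add_two_mul_finrank hB.nondegenerate
      (span_singleton_le_orthogonal hB.isAlt v)
    rw [finrank_span_singleton hv, hdim] at hreduction
    rw [Nat.card_eq_fintype_card]
    exact ih (by lia) _ (hB.reducedForm _)
end
end

section
/- Let B be a symplectic form on a 2J-dimensional vector space V over the field F_2 with two elements. If S ⊆ V satisfies B(v₁, v₂) = 1 for all v₁, v₂ ∈ S with v₁ ≠ v₂, then #S ≤ 2J + 1. -/
noncomputable section

/- For each `v ∈ S`, the affine functional `w ↦ B v w - 1` vanishes on `S \ {v}`, and takes the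
value `-1` at `v` because `B` is alternating. Such functionals separate the coefficients of an
affine relation, so `S` is affinely independent and has at most `dim V + 1` elements. -/

section AffineIndependence

variable {ι R V : Type*} [Ring R] [AddCommGroup V] [Module R V]

theorem affineIndependent_of_pairwise_dual_apply_eq [NoZeroDivisors R] {v : ι → V}
    (f : ι → Module.Dual R V) (c : ι → R) (hne : Pairwise fun i j ↦ f i (v j) = c i)
    (hself : ∀ i, f i (v i) ≠ c i) : AffineIndependent R v := by
  rw [affineIndependent_iff]
  intro s a ha hav i hi
  have hsum : ∑ j ∈ s, a j * (f i (v j) - c i) = 0 := by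
    calc ∑ j ∈ s, a j * (f i (v j) - c i)
        = f i (∑ j ∈ s, a j • v j) - (∑ j ∈ s, a j) * c i := by
          simp only [mul_sub, Finset.sum_sub_distrib, Finset.sum_mul, map_sum, map_smul,
            smul_eq_mul]
      _ = 0 := by rw [ha, hav, map_zero, zero_mul, sub_zero]
  have hsingle : ∑ j ∈ s, a j * (f i (v j) - c i) = a i * (f i (v i) - c i) :=
    Finset.sum_eq_single_of_mem i hi fun j _ hji ↦ by rw [hne hji.symm, sub_self, mul_zero]
  exact (mul_eq_zero.mp (hsingle.symm.trans hsum)).resolve_right (sub_ne_zero.mpr (hself i))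

theorem card_le_finrank_add_one_of_affineIndependent [StrongRankCondition R] [Module.Finite R V]
    {P : Type*} [AddTorsor V P] [Fintype ι] {p : ι → P} (hp : AffineIndependent R p) :
    Fintype.card ι ≤ Module.finrank R V + 1 := by
  classical
  cases isEmpty_or_nonempty ι with
  | inl _ => simp only [Fintype.card_eq_zero, zero_le]
  | inr hι =>
    obtain ⟨i₀⟩ := hι
    have hdiff := (affineIndependent_iff_linearIndependent_vsub R p i₀).mp hp
    have hcard : Fintype.card {i // i ≠ i₀} = Fintype.card ι - 1 := Set.card_ne_eq i₀
    exact Nat.sub_le_iff_le_add.mp (hcard ▸ hdiff.fintype_card_le_finrank)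

end AffineIndependence

theorem pairwise_nonorthogonal_set_card_le_general {R V : Type*} [CommRing R] [IsDomain R]
    [AddCommGroup V] [Module R V] [Module.Finite R V] (B : V →ₗ[R] V →ₗ[R] R) (c : R)
    (S : Finset V) (hS : (S : Set V).Pairwise fun v w ↦ B v w = c)
    (hself : ∀ v ∈ S, B v v ≠ c) : S.card ≤ Module.finrank R V + 1 := by
  have hind : AffineIndependent R ((↑) : S → V) :=
    affineIndependent_of_pairwise_dual_apply_eq (fun v : S ↦ B v) (fun _ ↦ c)
      (fun v w hvw ↦ hS v.2 w.2 (Subtype.coe_ne_coe.mpr hvw)) fun v ↦ hself v v.2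
  simpa only [Fintype.card_coe] using card_le_finrank_add_one_of_affineIndependent hind

/-- If `B` is a symplectic form on a `2J`-dimensional space over
`F₂` and `S` is a set of vectors with `B(v₁,v₂) = 1` for all distinct
`v₁, v₂ ∈ S`, then `#S ≤ 2J + 1`. -/
theorem pairwise_nonorthogonal_set_card_le
    {J : ℕ}
    {V : Type*} [AddCommGroup V] [Module (ZMod 2) V] [Fintype V] [DecidableEq V]
    (hdim : Module.finrank (ZMod 2) V = 2 * J)
    (B : V →ₗ[ZMod 2] V →ₗ[ZMod 2] ZMod 2) (hB : IsSymplectic B)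
    (S : Finset V) (hS : ∀ v₁ ∈ S, ∀ v₂ ∈ S, v₁ ≠ v₂ → B v₁ v₂ = 1) :
    S.card ≤ 2 * J + 1 :=
  hdim ▸ pairwise_nonorthogonal_set_card_le_general B 1 S hS fun v _ ↦ (hB.1 v).trans_ne zero_ne_one
end
end

section
/- Let B be a symplectic form on a 2J-dimensional vector space V over F_2 and let Q be a quadratic form yielding B, with quadric 𝒬. Then the translates v + 𝒬 (v ∈ V) are pairwise distinct, each translate v + 𝒬 is an affine quadric, and conversely every affine quadric of cardinality #𝒬 equals v + 𝒬 for some v ∈ V. Since quadratic forms yielding B of both signs exist, there are consequently exactly 2^{2J} affine quadrics of each of the two sizes 2^{J−1}(2^J+1) and 2^{J−1}(2^J−1). -/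
noncomputable section

/-- `Q` is a quadratic form yielding the bilinear form `B` over `F₂`. -/
def YieldsForm {V : Type*} [AddCommGroup V] [Module (ZMod 2) V]
    (B : V →ₗ[ZMod 2] V →ₗ[ZMod 2] ZMod 2) (Q : V → ZMod 2) : Prop :=
  ∀ v₁ v₂ : V, Q (v₁ + v₂) + Q v₁ + Q v₂ = B v₁ v₂

/-- The quadric of a quadratic form: its set of zeros. -/
def quadric {V : Type*} (Q : V → ZMod 2) : Set V := {v | Q v = 0}

/-- A subset is an affine quadric if it or its complement is the quadric of
some quadratic form yielding `B`. -/
def IsAffineQuadric {V : Type*} [AddCommGroup V] [Module (ZMod 2) V]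
    (B : V →ₗ[ZMod 2] V →ₗ[ZMod 2] ZMod 2) (D : Set V) : Prop :=
  ∃ Q : V → ZMod 2, YieldsForm B Q ∧ (D = quadric Q ∨ D = (quadric Q)ᶜ)

/-!
Polarisation gives `Q (v + x) = Q x + B v x + Q v`, so the translate `v + 𝒬` is the zero set of the
form `Q + B v` shifted by the constant `Q v`. Two forms yielding `B` differ by a linear functional,
which by nondegeneracy is `B v` for some `v`; hence every affine quadric is a translate of `𝒬` or
the complement of one. The two kinds are told apart by their size: the Gauss sum
`∑ v, (-1) ^ Q v = #𝒬 - #𝒬ᶜ` has square `#V`, so it is `± 2 ^ J` and does not vanish.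
-/

section Quadric

variable {X : Type*}

theorem quadric_compl (f : X → ZMod 2) : (quadric f)ᶜ = quadric fun x => f x + 1 := by
  have ne_zero_iff : ∀ a : ZMod 2, a ≠ 0 ↔ a + 1 = 0 := by decide
  ext x
  exact ne_zero_iff (f x)

theorem quadric_injective : Function.Injective (quadric : (X → ZMod 2) → Set X) := by
  have eq_of_zero_iff : ∀ a b : ZMod 2, (a = 0 ↔ b = 0) → a = b := by decide
  intro f g h
  ext1 x
  exact eq_of_zero_iff _ _ (Set.ext_iff.mp h x)

theorem image_add_left_quadric {V : Type*} [AddCommGroup V] [Module (ZMod 2) V]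
    (f : V → ZMod 2) (v : V) : (fun x => v + x) '' quadric f = quadric fun x => f (v + x) := by
  rw [Set.image_add_left, ZModModule.neg_eq_self]
  rfl

end Quadric

section SignChar

/-- The additive character `a ↦ (-1) ^ a` of `𝔽₂`, with integer values; summed over a space it
counts zeros of an `𝔽₂`-valued function minus non-zeros. -/
def signChar : AddChar (ZMod 2) ℤ := AddChar.zmodChar 2 (ζ := -1) (by norm_num)

theorem signChar_eq_ite : ∀ a : ZMod 2, signChar a = if a = 0 then 1 else -1 := by decide

theorem sum_signChar_eq_ncard_sub_ncard_compl {X : Type*} [Fintype X] (f : X → ZMod 2) :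
    ∑ x, signChar (f x) = ((quadric f).ncard : ℤ) - ((quadric f)ᶜ.ncard : ℤ) := by
  simp only [signChar_eq_ite, Finset.sum_ite, Finset.sum_const, quadric, Set.compl_ofPred,
    Set.ncard_eq_toFinset_card', Set.toFinset_ofPred, nsmul_eq_mul, mul_one, mul_neg,
    sub_eq_add_neg]

theorem sum_signChar_eq_zero {A : Type*} [AddGroup A] [Fintype A] {f : A →+ ZMod 2}
    (hf : f ≠ 0) : ∑ a, signChar (f a) = 0 := by
  have eq_zero_of_signChar : ∀ a : ZMod 2, signChar a = 1 → a = 0 := by decide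
  have hψ : signChar.compAddMonoidHom f ≠ 0 := fun h =>
    hf <| AddMonoidHom.ext fun a => eq_zero_of_signChar _ (DFunLike.congr_fun h a)
  exact AddChar.sum_eq_zero_iff_ne_zero.mpr hψ

end SignChar

theorem IsSymplectic.separatingLeft {F V : Type*} [CommRing F] [AddCommGroup V] [Module F V]
    {B : V →ₗ[F] V →ₗ[F] F} (hB : IsSymplectic B) : B.SeparatingLeft := by
  intro v hv
  by_contra hne
  obtain ⟨w, hw⟩ := hB.2 v hne
  exact hw (hv w)

section AffineQuadric

variable {V : Type*} [AddCommGroup V] [Module (ZMod 2) V]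
  {B : V →ₗ[ZMod 2] V →ₗ[ZMod 2] ZMod 2} {Q Q' : V → ZMod 2} {D : Set V}

namespace YieldsForm

theorem map_add (hQ : YieldsForm B Q) (v x : V) : Q (v + x) = Q x + B v x + Q v := by
  rw [← hQ v x]
  linear_combination -CharTwo.add_self_eq_zero (Q v) - CharTwo.add_self_eq_zero (Q x)

theorem map_zero (hQ : YieldsForm B Q) : Q 0 = 0 := by
  simpa [CharTwo.add_self_eq_zero] using hQ 0 0

theorem add_linearMap (hQ : YieldsForm B Q) (f : V →ₗ[ZMod 2] ZMod 2) :
    YieldsForm B fun x => Q x + f x := by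
  intro x y
  simp only [_root_.map_add, ← hQ x y]
  linear_combination CharTwo.add_self_eq_zero (f x) + CharTwo.add_self_eq_zero (f y)

theorem exists_eq_add_linearMap (hQ : YieldsForm B Q) (hQ' : YieldsForm B Q') :
    ∃ f : V →ₗ[ZMod 2] ZMod 2, ∀ x, Q' x = Q x + f x := by
  let diff : V →+ ZMod 2 := AddMonoidHom.mk' (fun x => Q' x - Q x) fun x y => by
    rw [hQ.map_add, hQ'.map_add]
    ring
  exact ⟨diff.toZModLinearMap 2, fun x => (add_sub_cancel (Q x) (Q' x)).symm⟩

theorem exists_eq_add_apply [FiniteDimensional (ZMod 2) V] (hB : B.SeparatingLeft)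
    (hQ : YieldsForm B Q) (hQ' : YieldsForm B Q') : ∃ v, ∀ x, Q' x = Q x + B v x := by
  obtain ⟨f, hf⟩ := hQ.exists_eq_add_linearMap hQ'
  have hB' : B.Nondegenerate := LinearMap.BilinForm.Nondegenerate.ofSeparatingLeft hB
  refine ⟨(LinearMap.BilinForm.toDual B hB').symm f, fun x => ?_⟩
  rw [LinearMap.BilinForm.apply_toDual_symm_apply, hf]

theorem image_add_left_quadric_eq (hQ : YieldsForm B Q) (v : V) :
    (fun x => v + x) '' quadric Q = quadric fun x => Q x + B v x + Q v := by
  simp only [image_add_left_quadric, hQ.map_add]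

theorem image_add_left_quadric_injective (hB : B.SeparatingLeft) (hQ : YieldsForm B Q) :
    Function.Injective fun v : V => (fun x => v + x) '' quadric Q := by
  intro v w h
  simp only [hQ.image_add_left_quadric_eq] at h
  have h_eq : ∀ x, Q x + B v x + Q v = Q x + B w x + Q w := congrFun (quadric_injective h)
  have h_const : Q v = Q w := by simpa using h_eq 0
  refine sub_eq_zero.mp (hB _ fun x => ?_)
  rw [map_sub, LinearMap.sub_apply]
  linear_combination h_eq x - h_const

/-- Expanding the square of the Gauss sum and substituting `w = u + v`, the identity
`Q v + Q (u + v) = Q u + B u v` leaves the character sums of the functionals `B u`. -/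
theorem sq_sum_signChar [Fintype V] (hB : B.SeparatingLeft) (hQ : YieldsForm B Q) :
    (∑ v, signChar (Q v)) ^ 2 = (Fintype.card V : ℤ) := by
  have h_shift (v : V) : ∑ w, signChar (Q w) = ∑ u, signChar (Q (u + v)) :=
    (Equiv.sum_comp (Equiv.addRight v) fun w => signChar (Q w)).symm
  have h_polar (u v : V) :
      signChar (Q v) * signChar (Q (u + v)) = signChar (Q u) * signChar (B u v) := by
    rw [← AddChar.map_add_eq_mul, ← AddChar.map_add_eq_mul, hQ.map_add]
    congr 1
    linear_combination CharTwo.add_self_eq_zero (Q v)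
  have h_char (u : V) (hu : u ≠ 0) : ∑ v, signChar (B u v) = 0 := by
    refine sum_signChar_eq_zero (f := (B u).toAddMonoidHom) fun h => hu (hB u fun v => ?_)
    exact DFunLike.congr_fun h v
  calc (∑ v, signChar (Q v)) ^ 2
      = ∑ v, ∑ u, signChar (Q v) * signChar (Q (u + v)) := by
        rw [sq, Finset.sum_mul]
        refine Finset.sum_congr rfl fun v _ => ?_
        rw [h_shift v, Finset.mul_sum]
    _ = ∑ u, signChar (Q u) * ∑ v, signChar (B u v) := by
        rw [Finset.sum_comm]
        simp only [h_polar, Finset.mul_sum]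
    _ = signChar (Q 0) * ∑ v, signChar (B 0 v) :=
        Fintype.sum_eq_single 0 fun u hu => by rw [h_char u hu, mul_zero]
    _ = Fintype.card V := by simp [hQ.map_zero]

theorem sq_ncard_sub_ncard_compl [Finite V] (hB : B.SeparatingLeft) (hQ : YieldsForm B Q) :
    ((quadric Q).ncard - (quadric Q)ᶜ.ncard : ℤ) ^ 2 = Nat.card V := by
  have := Fintype.ofFinite V
  rw [← sum_signChar_eq_ncard_sub_ncard_compl, hQ.sq_sum_signChar hB, Nat.card_eq_fintype_card]

theorem ncard_ne_ncard_compl [Finite V] (hB : B.SeparatingLeft) (hQ : YieldsForm B Q) :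
    (quadric Q).ncard ≠ (quadric Q)ᶜ.ncard := by
  intro h
  have h_sq := hQ.sq_ncard_sub_ncard_compl hB
  rw [h, sub_self, zero_pow two_ne_zero] at h_sq
  exact Nat.card_pos.ne (mod_cast h_sq)

theorem ncard_quadric_and_compl_eq_or_eq [Finite V] {J : ℕ} (hJ : 0 < J)
    (hdim : Module.finrank (ZMod 2) V = 2 * J) (hB : B.SeparatingLeft) (hQ : YieldsForm B Q) :
    ((quadric Q).ncard = 2 ^ (J - 1) * (2 ^ J + 1) ∧
      (quadric Q)ᶜ.ncard = 2 ^ (J - 1) * (2 ^ J - 1)) ∨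
    ((quadric Q).ncard = 2 ^ (J - 1) * (2 ^ J - 1) ∧
      (quadric Q)ᶜ.ncard = 2 ^ (J - 1) * (2 ^ J + 1)) := by
  have h_card : Nat.card V = (2 ^ J) ^ 2 := by
    rw [Module.natCard_eq_pow_finrank (K := ZMod 2), hdim, Nat.card_zmod, mul_comm, pow_mul]
  have h_add : ((quadric Q).ncard + (quadric Q)ᶜ.ncard : ℤ) = (2 ^ J) ^ 2 :=
    mod_cast (Set.ncard_add_ncard_compl (quadric Q)).trans h_card
  have h_sub : ((quadric Q).ncard - (quadric Q)ᶜ.ncard : ℤ) = 2 ^ J ∨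
      ((quadric Q).ncard - (quadric Q)ᶜ.ncard : ℤ) = -2 ^ J := by
    rw [← sq_eq_sq_iff_eq_or_eq_neg, hQ.sq_ncard_sub_ncard_compl hB, h_card]
    push_cast
    rfl
  have h_two : (2 : ℤ) ^ J = 2 * 2 ^ (J - 1) := (mul_pow_sub_one hJ.ne' 2).symm
  zify [Nat.one_le_two_pow (n := J)]
  rw [h_two] at h_add h_sub ⊢
  exact h_sub.imp (fun h => by constructor <;> linarith) (fun h => by constructor <;> linarith)

end YieldsForm

theorem isAffineQuadric_iff_exists_add_const :
    IsAffineQuadric B D ↔ ∃ Q, YieldsForm B Q ∧ ∃ c, D = quadric fun x => Q x + c := by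
  have exists_iff : ∀ p : ZMod 2 → Prop, (∃ c, p c) ↔ p 0 ∨ p 1 := fun _ => Fin.exists_fin_two
  simp only [IsAffineQuadric, quadric_compl, exists_iff, add_zero]

theorem isAffineQuadric_compl_iff : IsAffineQuadric B Dᶜ ↔ IsAffineQuadric B D := by
  have compl_eq_iff (S : Set V) : Dᶜ = S ↔ D = Sᶜ := by rw [compl_eq_comm, eq_comm]
  simp only [IsAffineQuadric, compl_eq_iff, compl_compl, or_comm]

namespace YieldsForm

theorem isAffineQuadric_image_add_left (hQ : YieldsForm B Q) (v : V) :
    IsAffineQuadric B ((fun x => v + x) '' quadric Q) :=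
  isAffineQuadric_iff_exists_add_const.mpr
    ⟨_, hQ.add_linearMap (B v), Q v, hQ.image_add_left_quadric_eq v⟩

theorem exists_eq_image_add_left_or_compl [FiniteDimensional (ZMod 2) V] (hB : B.SeparatingLeft)
    (hQ : YieldsForm B Q) (hD : IsAffineQuadric B D) :
    ∃ v, D = (fun x => v + x) '' quadric Q ∨ D = ((fun x => v + x) '' quadric Q)ᶜ := by
  obtain ⟨Q', hQ', c, rfl⟩ := isAffineQuadric_iff_exists_add_const.mp hD
  obtain ⟨v, hv⟩ := hQ.exists_eq_add_apply hB hQ'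
  have h_const : ∀ a c : ZMod 2, c = a ∨ c = a + 1 := by decide
  refine ⟨v, ?_⟩
  rw [hQ.image_add_left_quadric_eq, quadric_compl]
  rcases h_const (Q v) c with rfl | rfl <;> simp only [hv, add_assoc, true_or, or_true]

theorem exists_eq_image_add_left_of_ncard_eq [Finite V] (hB : B.SeparatingLeft)
    (hQ : YieldsForm B Q) (hD : IsAffineQuadric B D) (h_ncard : D.ncard = (quadric Q).ncard) :
    ∃ v, D = (fun x => v + x) '' quadric Q := by
  obtain ⟨v, h | h⟩ := hQ.exists_eq_image_add_left_or_compl hB hD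
  · exact ⟨v, h⟩
  · refine absurd ?_ (hQ.ncard_ne_ncard_compl hB)
    rw [← h_ncard, h, Set.ncard_compl, Set.ncard_compl,
      Set.ncard_image_of_injective _ (add_right_injective v)]

theorem ncard_setOf_isAffineQuadric_ncard_eq [Finite V] (hB : B.SeparatingLeft)
    (hQ : YieldsForm B Q) :
    {D : Set V | IsAffineQuadric B D ∧ D.ncard = (quadric Q).ncard}.ncard = Nat.card V := by
  have h_range : {D : Set V | IsAffineQuadric B D ∧ D.ncard = (quadric Q).ncard} =
      Set.range fun v : V => (fun x => v + x) '' quadric Q := by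
    ext D
    constructor
    · rintro ⟨hD, h_ncard⟩
      obtain ⟨v, rfl⟩ := hQ.exists_eq_image_add_left_of_ncard_eq hB hD h_ncard
      exact ⟨v, rfl⟩
    · rintro ⟨v, rfl⟩
      exact ⟨hQ.isAffineQuadric_image_add_left v,
        Set.ncard_image_of_injective _ (add_right_injective v)⟩
  rw [h_range, ← Set.image_univ,
    Set.ncard_image_of_injective _ (hQ.image_add_left_quadric_injective hB), Set.ncard_univ]

theorem ncard_setOf_isAffineQuadric_ncard_eq_compl [Finite V] (hB : B.SeparatingLeft)
    (hQ : YieldsForm B Q) :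
    {D : Set V | IsAffineQuadric B D ∧ D.ncard = (quadric Q)ᶜ.ncard}.ncard = Nat.card V := by
  have h_ncard (D : Set V) : D.ncard = (quadric Q)ᶜ.ncard ↔ Dᶜ.ncard = (quadric Q).ncard := by
    have := Set.ncard_add_ncard_compl D
    have := Set.ncard_add_ncard_compl (quadric Q)
    lia
  have h_image : {D : Set V | IsAffineQuadric B D ∧ D.ncard = (quadric Q)ᶜ.ncard} =
      compl '' {D : Set V | IsAffineQuadric B D ∧ D.ncard = (quadric Q).ncard} := by
    ext D
    rw [Set.mem_compl_image, Set.mem_ofPred_eq, Set.mem_ofPred_eq, isAffineQuadric_compl_iff,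
      h_ncard]
  rw [h_image, Set.ncard_image_of_injective _ compl_injective,
    hQ.ncard_setOf_isAffineQuadric_ncard_eq hB]

end YieldsForm

end AffineQuadric

/-- The translates of the quadric of a quadratic form yielding `B`
are pairwise distinct affine quadrics, every affine quadric of the same size is
such a translate, and there are exactly `2^{2J}` affine quadrics of each of the
two possible sizes `2^{J−1}(2^J+1)` and `2^{J−1}(2^J−1)`. -/
theorem affine_quadrics_are_translates
    {J : ℕ} (hJ : 0 < J)
    {V : Type*} [AddCommGroup V] [Module (ZMod 2) V] [Fintype V] [DecidableEq V]
    (hdim : Module.finrank (ZMod 2) V = 2 * J)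
    (B : V →ₗ[ZMod 2] V →ₗ[ZMod 2] ZMod 2) (hB : IsSymplectic B)
    (Q : V → ZMod 2) (hQ : YieldsForm B Q) :
    (∀ v w : V,
      (fun x => v + x) '' quadric Q = (fun x => w + x) '' quadric Q → v = w) ∧
    (∀ v : V, IsAffineQuadric B ((fun x => v + x) '' quadric Q)) ∧
    (∀ D : Set V, IsAffineQuadric B D → D.ncard = (quadric Q).ncard →
      ∃ v : V, D = (fun x => v + x) '' quadric Q) ∧
    {D : Set V | IsAffineQuadric B D ∧
      D.ncard = 2 ^ (J - 1) * (2 ^ J + 1)}.ncard = 2 ^ (2 * J) ∧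
    {D : Set V | IsAffineQuadric B D ∧
      D.ncard = 2 ^ (J - 1) * (2 ^ J - 1)}.ncard = 2 ^ (2 * J) := by
  have hB' := hB.separatingLeft
  have h_card : Nat.card V = 2 ^ (2 * J) := by
    rw [Module.natCard_eq_pow_finrank (K := ZMod 2), hdim, Nat.card_zmod]
  have h_count := hQ.ncard_setOf_isAffineQuadric_ncard_eq hB'
  have h_count_compl := hQ.ncard_setOf_isAffineQuadric_ncard_eq_compl hB'
  rw [h_card] at h_count h_count_compl
  refine ⟨fun v w h => hQ.image_add_left_quadric_injective hB' h,
    hQ.isAffineQuadric_image_add_left,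
    fun D hD h_ncard => hQ.exists_eq_image_add_left_of_ncard_eq hB' hD h_ncard, ?_⟩
  rcases hQ.ncard_quadric_and_compl_eq_or_eq hJ hdim hB' with ⟨h_plus, h_minus⟩ | ⟨h_minus, h_plus⟩
  · rw [← h_plus, ← h_minus]
    exact ⟨h_count, h_count_compl⟩
  · rw [← h_plus, ← h_minus]
    exact ⟨h_count_compl, h_count⟩
end
end
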